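/- arXiv:2002.04842 — 4 statements merged into one kernel-verified Lean document; each statement's English description precedes it below -/
import Mathlib

section
/- Let (A, α) be a monoidal Hom-bialgebra and let (H, β) be a monoidal Hom-algebra which is a right (A, α)-Hom-module algebra via ◁. Then the vector space A ⊗ H, equipped with the automorphism α ⊗ β, the unit 1_A ⊗ 1_H, and the multiplication (a # h)(b # g) = a·α(b_1) # (β⁻¹(h) ◁ b_2)·g, is a monoidal Hom-algebra (the right Hom-smash product A # H). -/
open TensorProduct

/-! Basic notions of monoidal Hom-algebras, Hom-coalgebras, Hom-bialgebras and
Hom-Hopf algebras over a field `k`, following Caenepeel–Goyvaerts.  All Sweedler-type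
identities are expressed via the tensor-product calculus of Mathlib. -/

/-- A (unital) monoidal Hom-associative algebra `(A, α)`. -/
structure HomAlg (k : Type*) [Field k] (A : Type*) [AddCommGroup A] [Module k A] where
  mul : A →ₗ[k] A →ₗ[k] A
  one : A
  str : A ≃ₗ[k] A
  hom_assoc : ∀ a b c, mul (str a) (mul b c) = mul (mul a b) (str c)
  mul_one : ∀ a, mul a one = str a
  one_mul : ∀ a, mul one a = str a
  str_mul : ∀ a b, str (mul a b) = mul (str a) (str b)
  str_one : str one = one

/-- A (counital) monoidal Hom-coassociative coalgebra `(C, λ)`. -/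
structure HomCoalg (k : Type*) [Field k] (C : Type*) [AddCommGroup C] [Module k C] where
  comul : C →ₗ[k] C ⊗[k] C
  counit : C →ₗ[k] k
  str : C ≃ₗ[k] C
  hom_coassoc : ∀ c,
    TensorProduct.map str.symm.toLinearMap comul (comul c)
      = TensorProduct.assoc k C C C (TensorProduct.map comul str.symm.toLinearMap (comul c))
  counit_comul_right : ∀ c,
    TensorProduct.rid k C (TensorProduct.map LinearMap.id counit (comul c)) = str.symm c
  counit_comul_left : ∀ c,
    TensorProduct.lid k C (TensorProduct.map counit LinearMap.id (comul c)) = str.symm c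
  comul_str : ∀ c, comul (str c) = TensorProduct.map str.toLinearMap str.toLinearMap (comul c)
  counit_str : ∀ c, counit (str c) = counit c

/-- A monoidal Hom-bialgebra `(H, β)`. -/
structure HomBialg (k : Type*) [Field k] (H : Type*) [AddCommGroup H] [Module k H]
    extends HomAlg k H, HomCoalg k H where
  comul_mul : ∀ a b,
    comul (mul a b)
      = TensorProduct.map (TensorProduct.lift mul) (TensorProduct.lift mul)
          (TensorProduct.tensorTensorTensorComm k H H H H (comul a ⊗ₜ[k] comul b))
  comul_one : comul one = one ⊗ₜ[k] one
  counit_mul : ∀ a b, counit (mul a b) = counit a * counit b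
  counit_one : counit one = 1

/-- A monoidal Hom-Hopf algebra `(H, β, S)`. -/
structure HomHopf (k : Type*) [Field k] (H : Type*) [AddCommGroup H] [Module k H]
    extends HomBialg k H where
  S : H →ₗ[k] H
  S_str : ∀ h, str (S h) = S (str h)
  S_mul_left : ∀ h,
    TensorProduct.lift mul (TensorProduct.map S LinearMap.id (comul h)) = counit h • one
  S_mul_right : ∀ h,
    TensorProduct.lift mul (TensorProduct.map LinearMap.id S (comul h)) = counit h • one

section HomDefs

variable {k : Type*} [Field k] {A H M C T : Type*}
  [AddCommGroup A] [Module k A] [AddCommGroup H] [Module k H]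
  [AddCommGroup M] [Module k M] [AddCommGroup C] [Module k C]
  [AddCommGroup T] [Module k T]

/-- `(M, μ)` is a right `(A, α)`-Hom-module via `act`. -/
def IsRightHomModule (AA : HomAlg k A) (μ : M ≃ₗ[k] M) (act : M →ₗ[k] A →ₗ[k] M) : Prop :=
  (∀ m a b, act (act m a) (AA.str b) = act (μ m) (AA.mul a b)) ∧
  (∀ m, act m AA.one = μ m) ∧
  (∀ m a, μ (act m a) = act (μ m) (AA.str a))

/-- The monoidal Hom-algebra `(HM, β)` is a right `(A, α)`-Hom-module algebra via `act`. -/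
def IsRightHomModuleAlg (AA : HomBialg k A) (HM : HomAlg k H)
    (act : H →ₗ[k] A →ₗ[k] H) : Prop :=
  IsRightHomModule AA.toHomAlg HM.str act ∧
  (∀ h g a, act (HM.mul h g) a
      = TensorProduct.lift HM.mul (TensorProduct.map (act h) (act g) (AA.comul a))) ∧
  (∀ a, act HM.one a = AA.counit a • HM.one)

/-- `(M, μ)` is a left `(H, β)`-Hom-module via `act`. -/
def IsLeftHomModule (HHa : HomAlg k H) (μ : M ≃ₗ[k] M) (act : H →ₗ[k] M →ₗ[k] M) : Prop :=
  (∀ h g m, act (HHa.str h) (act g m) = act (HHa.mul h g) (μ m)) ∧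
  (∀ m, act HHa.one m = μ m) ∧
  (∀ h m, μ (act h m) = act (HHa.str h) (μ m))

/-- The monoidal Hom-algebra `(AM, α)` is a left `(H, β)`-Hom-module algebra via `act`. -/
def IsLeftHomModuleAlg (HB : HomBialg k H) (AM : HomAlg k A)
    (act : H →ₗ[k] A →ₗ[k] A) : Prop :=
  IsLeftHomModule HB.toHomAlg AM.str act ∧
  (∀ h a b, act h (AM.mul a b)
      = TensorProduct.lift AM.mul
          (TensorProduct.map (act.flip a) (act.flip b) (HB.comul h))) ∧
  (∀ h, act h AM.one = HB.counit h • AM.one)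

/-- `(M, μ)` is a left `(H, β)`-Hom-comodule via `ρ`. -/
def IsLeftHomComodule (HC : HomCoalg k H) (μ : M ≃ₗ[k] M) (ρ : M →ₗ[k] H ⊗[k] M) : Prop :=
  (∀ m, TensorProduct.map HC.str.symm.toLinearMap ρ (ρ m)
      = TensorProduct.assoc k H H M
          (TensorProduct.map HC.comul μ.symm.toLinearMap (ρ m))) ∧
  (∀ m, ρ (μ m) = TensorProduct.map HC.str.toLinearMap μ.toLinearMap (ρ m)) ∧
  (∀ m, TensorProduct.lid k M (TensorProduct.map HC.counit LinearMap.id (ρ m)) = μ.symm m)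

/-- The monoidal Hom-coalgebra `(CC, λ)` is a left `(H, β)`-Hom-comodule coalgebra via `ρ`. -/
def IsLeftHomComoduleCoalg (HB : HomBialg k H) (CC : HomCoalg k C)
    (ρ : C →ₗ[k] H ⊗[k] C) : Prop :=
  IsLeftHomComodule HB.toHomCoalg CC.str ρ ∧
  (∀ c, TensorProduct.map LinearMap.id CC.comul (ρ c)
      = TensorProduct.map (TensorProduct.lift HB.mul) LinearMap.id
          (TensorProduct.tensorTensorTensorComm k H C H C
            (TensorProduct.map ρ ρ (CC.comul c)))) ∧
  (∀ c, TensorProduct.rid k H (TensorProduct.map LinearMap.id CC.counit (ρ c))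
      = CC.counit c • HB.one)

/-- The monoidal Hom-algebra `(AM, α)` is a left `(H, β)`-Hom-comodule algebra via `ρ`. -/
def IsLeftHomComoduleAlg (HB : HomBialg k H) (AM : HomAlg k A)
    (ρ : A →ₗ[k] H ⊗[k] A) : Prop :=
  IsLeftHomComodule HB.toHomCoalg AM.str ρ ∧
  (∀ a b, ρ (AM.mul a b)
      = TensorProduct.map (TensorProduct.lift HB.mul) (TensorProduct.lift AM.mul)
          (TensorProduct.tensorTensorTensorComm k H A H A (ρ a ⊗ₜ[k] ρ b))) ∧
  ρ AM.one = HB.one ⊗ₜ[k] AM.one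

/-- `(M, μ)` is a right `(C, λ)`-Hom-comodule via `ρ`. -/
def IsRightHomComodule (CC : HomCoalg k C) (μ : M ≃ₗ[k] M) (ρ : M →ₗ[k] M ⊗[k] C) : Prop :=
  (∀ m, TensorProduct.map μ.symm.toLinearMap CC.comul (ρ m)
      = TensorProduct.assoc k M C C
          (TensorProduct.map ρ CC.str.symm.toLinearMap (ρ m))) ∧
  (∀ m, ρ (μ m) = TensorProduct.map μ.toLinearMap CC.str.toLinearMap (ρ m)) ∧
  (∀ m, TensorProduct.rid k M (TensorProduct.map LinearMap.id CC.counit (ρ m)) = μ.symm m)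

/-- The monoidal Hom-coalgebra `(CC, λ)` is a right `(A, α)`-Hom-comodule coalgebra via `ρ`. -/
def IsRightHomComoduleCoalg (AB : HomBialg k A) (CC : HomCoalg k C)
    (ρ : C →ₗ[k] C ⊗[k] A) : Prop :=
  IsRightHomComodule AB.toHomCoalg CC.str ρ ∧
  (∀ c, TensorProduct.map CC.comul LinearMap.id (ρ c)
      = TensorProduct.map LinearMap.id (TensorProduct.lift AB.mul)
          (TensorProduct.tensorTensorTensorComm k C A C A
            (TensorProduct.map ρ ρ (CC.comul c)))) ∧
  (∀ c, TensorProduct.lid k A (TensorProduct.map CC.counit LinearMap.id (ρ c))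
      = CC.counit c • AB.one)

/-- The monoidal Hom-algebra `(MM, μ)` is a right `(A, α)`-Hom-comodule algebra via `ρ`. -/
def IsRightHomComoduleAlg (AB : HomBialg k A) (MM : HomAlg k M)
    (ρ : M →ₗ[k] M ⊗[k] A) : Prop :=
  IsRightHomComodule AB.toHomCoalg MM.str ρ ∧
  (∀ m n, ρ (MM.mul m n)
      = TensorProduct.map (TensorProduct.lift MM.mul) (TensorProduct.lift AB.mul)
          (TensorProduct.tensorTensorTensorComm k M A M A (ρ m ⊗ₜ[k] ρ n))) ∧
  ρ MM.one = MM.one ⊗ₜ[k] AB.one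

/-- A matched copair `(A, H)` of monoidal Hom-bialgebras:
`A` is a left `H`-Hom-comodule algebra via `ρA : A → H ⊗ A`, `H` is a right
`A`-Hom-comodule algebra via `ρH : H → H ⊗ A`, subject to conditions (4.1)–(4.5). -/
def IsMatchedCopair (AB : HomBialg k A) (HB : HomBialg k H)
    (ρA : A →ₗ[k] H ⊗[k] A) (ρH : H →ₗ[k] H ⊗[k] A) : Prop :=
  IsLeftHomComoduleAlg HB AB.toHomAlg ρA ∧
  IsRightHomComoduleAlg AB HB.toHomAlg ρH ∧
  -- (4.1)
  (∀ a, TensorProduct.rid k H (TensorProduct.map LinearMap.id AB.counit (ρA a))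
      = AB.counit a • HB.one) ∧
  -- (4.2)
  (∀ a, TensorProduct.map LinearMap.id AB.comul (ρA a)
      = TensorProduct.map
          (TensorProduct.lift HB.mul ∘ₗ TensorProduct.map LinearMap.id HB.str.toLinearMap)
          ((TensorProduct.map
              (TensorProduct.lift AB.mul ∘ₗ TensorProduct.map AB.str.symm.toLinearMap LinearMap.id)
              LinearMap.id) ∘ₗ (TensorProduct.assoc k A A A).symm.toLinearMap)
          (TensorProduct.tensorTensorTensorComm k H A H (A ⊗[k] A)
            (TensorProduct.map LinearMap.id (TensorProduct.assoc k H A A).toLinearMap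
              (TensorProduct.map LinearMap.id (TensorProduct.map ρH LinearMap.id)
                (TensorProduct.map ρA ρA (AB.comul a)))))) ∧
  -- (4.3)
  (∀ h, TensorProduct.lid k A (TensorProduct.map HB.counit LinearMap.id (ρH h))
      = HB.counit h • AB.one) ∧
  -- (4.4)
  (∀ h, TensorProduct.map HB.comul LinearMap.id (ρH h)
      = TensorProduct.map
          ((TensorProduct.map LinearMap.id
              (TensorProduct.lift HB.mul ∘ₗ TensorProduct.map LinearMap.id HB.str.symm.toLinearMap))
            ∘ₗ (TensorProduct.assoc k H H H).toLinearMap)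
          (TensorProduct.lift AB.mul ∘ₗ TensorProduct.map AB.str.toLinearMap LinearMap.id)
          (TensorProduct.tensorTensorTensorComm k (H ⊗[k] H) A H A
            (TensorProduct.map (TensorProduct.assoc k H H A).symm.toLinearMap LinearMap.id
              (TensorProduct.map (TensorProduct.map LinearMap.id ρA) LinearMap.id
                (TensorProduct.map ρH ρH (HB.comul h)))))) ∧
  -- (4.5)
  (∀ h a, TensorProduct.map (TensorProduct.lift HB.mul) (TensorProduct.lift AB.mul)
        (TensorProduct.tensorTensorTensorComm k H A H A (ρH h ⊗ₜ[k] ρA a))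
      = TensorProduct.map (TensorProduct.lift HB.mul) (TensorProduct.lift AB.mul)
          (TensorProduct.tensorTensorTensorComm k H A H A (ρA a ⊗ₜ[k] ρH h)))

/-- A coquasitriangular structure `ζ` (with convolution inverse `ζi`) on a monoidal
Hom-bialgebra `P`; conditions (5.1)–(5.4). -/
def IsCoquasitriangular (P : HomBialg k T) (ζ ζi : T →ₗ[k] T →ₗ[k] k) : Prop :=
  -- convolution invertibility
  (∀ h g, TensorProduct.lid k k
      (TensorProduct.map (TensorProduct.lift ζ) (TensorProduct.lift ζi)
        (TensorProduct.tensorTensorTensorComm k T T T T (P.comul h ⊗ₜ[k] P.comul g)))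
      = P.counit h * P.counit g) ∧
  (∀ h g, TensorProduct.lid k k
      (TensorProduct.map (TensorProduct.lift ζi) (TensorProduct.lift ζ)
        (TensorProduct.tensorTensorTensorComm k T T T T (P.comul h ⊗ₜ[k] P.comul g)))
      = P.counit h * P.counit g) ∧
  -- (5.1)
  (∀ h g, ζ (P.str h) (P.str g) = ζ h g) ∧
  -- (5.2)
  (∀ h g, TensorProduct.lid k T
      (TensorProduct.map (TensorProduct.lift ζ)
        (TensorProduct.lift P.mul ∘ₗ (TensorProduct.comm k T T).toLinearMap)
        (TensorProduct.tensorTensorTensorComm k T T T T (P.comul h ⊗ₜ[k] P.comul g)))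
      = TensorProduct.rid k T
          (TensorProduct.map (TensorProduct.lift P.mul) (TensorProduct.lift ζ)
            (TensorProduct.tensorTensorTensorComm k T T T T (P.comul h ⊗ₜ[k] P.comul g)))) ∧
  -- (5.3)
  (∀ h g c, ζ (P.str.symm h) (P.mul g c)
      = TensorProduct.lid k k
          (TensorProduct.map (ζ.flip (P.str g)) (ζ.flip (P.str c)) (P.comul h))) ∧
  -- (5.4)
  (∀ h g c, ζ (P.mul h g) (P.str.symm c)
      = TensorProduct.lid k k
          (TensorProduct.map (ζ (P.str h)) (ζ (P.str g))
            ((TensorProduct.comm k T T) (P.comul c))))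

/-- `σ` is a left monoidal Hom-2-cocycle on the monoidal Hom-bialgebra `P`. -/
def IsLeftHom2Cocycle (P : HomBialg k T) (σ : T →ₗ[k] T →ₗ[k] k) : Prop :=
  (∀ h g, σ (P.str h) (P.str g) = σ h g) ∧
  (∀ h g c, TensorProduct.lid k k
      (TensorProduct.map (TensorProduct.lift σ) (σ.flip c ∘ₗ TensorProduct.lift P.mul)
        (TensorProduct.tensorTensorTensorComm k T T T T (P.comul h ⊗ₜ[k] P.comul g)))
      = TensorProduct.lid k k
          (TensorProduct.map (TensorProduct.lift σ) (σ h ∘ₗ TensorProduct.lift P.mul)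
            (TensorProduct.tensorTensorTensorComm k T T T T (P.comul g ⊗ₜ[k] P.comul c))))

/-- `σ` is a right monoidal Hom-2-cocycle on the monoidal Hom-bialgebra `P`. -/
def IsRightHom2Cocycle (P : HomBialg k T) (σ : T →ₗ[k] T →ₗ[k] k) : Prop :=
  (∀ h g, σ (P.str h) (P.str g) = σ h g) ∧
  (∀ h g c, TensorProduct.lid k k
      (TensorProduct.map (σ.flip c ∘ₗ TensorProduct.lift P.mul) (TensorProduct.lift σ)
        (TensorProduct.tensorTensorTensorComm k T T T T (P.comul h ⊗ₜ[k] P.comul g)))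
      = TensorProduct.lid k k
          (TensorProduct.map (σ h ∘ₗ TensorProduct.lift P.mul) (TensorProduct.lift σ)
            (TensorProduct.tensorTensorTensorComm k T T T T (P.comul g ⊗ₜ[k] P.comul c))))

/-- Normality of a 2-cocycle: `σ(1, h) = σ(h, 1) = ε(h)`. -/
def IsNormal2Cocycle (P : HomBialg k T) (σ : T →ₗ[k] T →ₗ[k] k) : Prop :=
  (∀ h, σ P.one h = P.counit h) ∧ (∀ h, σ h P.one = P.counit h)

/-- The left-twisted product `h ·_σ g = σ(h₁, g₁) β(h₂ g₂)`. -/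
noncomputable def leftTwistMul (P : HomBialg k T) (σ : T →ₗ[k] T →ₗ[k] k) (h g : T) : T :=
  TensorProduct.lid k T
    (TensorProduct.map (TensorProduct.lift σ) (P.str.toLinearMap ∘ₗ TensorProduct.lift P.mul)
      (TensorProduct.tensorTensorTensorComm k T T T T (P.comul h ⊗ₜ[k] P.comul g)))

/-- The right-twisted product `h ·_σ g = β(h₁ g₁) σ(h₂, g₂)`. -/
noncomputable def rightTwistMul (P : HomBialg k T) (σ : T →ₗ[k] T →ₗ[k] k) (h g : T) : T :=
  TensorProduct.rid k T
    (TensorProduct.map (P.str.toLinearMap ∘ₗ TensorProduct.lift P.mul) (TensorProduct.lift σ)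
      (TensorProduct.tensorTensorTensorComm k T T T T (P.comul h ⊗ₜ[k] P.comul g)))

/-- The convolution product on the linear dual of a monoidal Hom-coalgebra:
`(u • v)(h) = u(h₁) v(h₂)`. -/
noncomputable def convD (CC : HomCoalg k H) (u v : Module.Dual k H) : Module.Dual k H :=
  (TensorProduct.lid k k).toLinearMap ∘ₗ TensorProduct.map u v ∘ₗ CC.comul

end HomDefs

/-!
Write `a ⊗ h ↦ a_R ⊗ h_R` for a linear map `R : H ⊗ A → A ⊗ H`. Multiplying `A ⊗ H` by
`(a ⊗ h)(b ⊗ g) = a b_R ⊗ h_R g`, Hom-associativity reduces to the fact that both triple products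
of `a ⊗ h`, `b ⊗ g`, `c ⊗ f` equal `α(a) (R(h ⊗ b) R(g ⊗ c)) β(f)`, where `A` acts on `A ⊗ H` from
the left and `H` from the right; this holds as soon as `R` is compatible with both multiplications.
The smash product is the case `R(h ⊗ b) = α(b₁) ⊗ β⁻¹(h) ◁ b₂`: compatibility with the product of
`A` is the module axiom, and compatibility with the product of `H` is the module algebra axiom
together with Hom-coassociativity.
-/

namespace HomAlg

variable {k : Type*} [Field k] {A : Type*} [AddCommGroup A] [Module k A] (AM : HomAlg k A)

theorem str_symm_mul (a b : A) :
    AM.str.symm (AM.mul a b) = AM.mul (AM.str.symm a) (AM.str.symm b) := by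
  simp [LinearEquiv.symm_apply_eq, AM.str_mul]

theorem str_symm_one : AM.str.symm AM.one = AM.one := by
  rw [LinearEquiv.symm_apply_eq, AM.str_one]

end HomAlg

/-- A Hom-twisting map between monoidal Hom-algebras `(A, α)` and `(H, β)`: a map
`R : H ⊗ A → A ⊗ H`, given as the bilinear map `twist`, along which the tensor product `A ⊗ H` can
be given a multiplication. Writing `R(h ⊗ a) = a_R ⊗ h_R = a_r ⊗ h_r`, the last two fields say
`R(β(h) ⊗ ab) = a_R b_r ⊗ β((h_R)_r)` and `R(hg ⊗ α(a)) = α((a_R)_r) ⊗ h_r g_R`. -/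
structure HomTwistingMap {k : Type*} [Field k] {A H : Type*} [AddCommGroup A] [Module k A]
    [AddCommGroup H] [Module k H] (AM : HomAlg k A) (HM : HomAlg k H) where
  twist : H →ₗ[k] A →ₗ[k] A ⊗[k] H
  twist_str : ∀ h a,
    twist (HM.str h) (AM.str a)
      = TensorProduct.map AM.str.toLinearMap HM.str.toLinearMap (twist h a)
  twist_one_left : ∀ a, twist HM.one a = a ⊗ₜ[k] HM.one
  twist_one_right : ∀ h, twist h AM.one = AM.one ⊗ₜ[k] h
  twist_mul_right : ∀ h a b,
    twist (HM.str h) (AM.mul a b)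
      = TensorProduct.map (TensorProduct.lift AM.mul) HM.str.toLinearMap
          ((TensorProduct.assoc k A A H).symm ((twist.flip b).lTensor A (twist h a)))
  twist_mul_left : ∀ h g a,
    twist (HM.mul h g) (AM.str a)
      = TensorProduct.map AM.str.toLinearMap (TensorProduct.lift HM.mul)
          (TensorProduct.assoc k A H H ((twist h).rTensor H (twist g a)))

namespace HomTwistingMap

variable {k : Type*} [Field k] {A H : Type*} [AddCommGroup A] [Module k A] [AddCommGroup H]
  [Module k H] {AM : HomAlg k A} {HM : HomAlg k H} (R : HomTwistingMap AM HM)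

/-- The multiplication `(a ⊗ h)(b ⊗ g) = a b_R ⊗ h_R g` on `A ⊗ H`, where
`R(h ⊗ b) = b_R ⊗ h_R`. -/
noncomputable def mul : A ⊗[k] H →ₗ[k] A ⊗[k] H →ₗ[k] A ⊗[k] H :=
  TensorProduct.curry
    (TensorProduct.map (TensorProduct.lift AM.mul) (TensorProduct.lift HM.mul) ∘ₗ
      (TensorProduct.tensorTensorTensorAssoc k A A H H).symm.toLinearMap ∘ₗ
      ((TensorProduct.lift R.twist).lTensor A).rTensor H ∘ₗ
      (TensorProduct.tensorTensorTensorAssoc k A H A H).toLinearMap)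

theorem mul_tmul_tmul (a : A) (h : H) (b : A) (g : H) :
    R.mul (a ⊗ₜ h) (b ⊗ₜ g) = TensorProduct.map (AM.mul a) (HM.mul.flip g) (R.twist h b) := by
  simp only [mul, TensorProduct.curry_apply, LinearMap.comp_apply, LinearEquiv.coe_coe,
    TensorProduct.tensorTensorTensorAssoc_tmul, LinearMap.rTensor_tmul, LinearMap.lTensor_tmul,
    TensorProduct.lift.tmul]
  induction R.twist h b with
  | zero => simp
  | add s t hs ht => simp only [map_add, TensorProduct.tmul_add, TensorProduct.add_tmul, hs, ht]
  | tmul x y => simp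

theorem mul_str_tmul_map (a : A) (h : H) (b : A) (f : H) (u : A ⊗[k] H) :
    R.mul (AM.str a ⊗ₜ HM.str h) (TensorProduct.map (AM.mul b) (HM.mul.flip f) u)
      = TensorProduct.map (AM.mul (AM.str a)) (HM.mul.flip (HM.str f))
          (R.mul (R.twist h b) u) := by
  induction u with
  | zero => simp
  | add u v hu hv => simp only [map_add, hu, hv]
  | tmul c g =>
    rw [TensorProduct.map_tmul, mul_tmul_tmul, R.twist_mul_right]
    induction R.twist h b with
    | zero => simp
    | add s t hs ht => simp only [map_add, LinearMap.add_apply, hs, ht]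
    | tmul x y =>
      rw [LinearMap.lTensor_tmul, mul_tmul_tmul, LinearMap.flip_apply, LinearMap.flip_apply]
      induction R.twist y c with
      | zero => simp
      | add s t hs ht => simp only [map_add, TensorProduct.tmul_add, hs, ht]
      | tmul p q => simp [HM.hom_assoc]

theorem mul_map_str_tmul (a : A) (g : H) (c : A) (f : H) (t : A ⊗[k] H) :
    R.mul (TensorProduct.map (AM.mul a) (HM.mul.flip g) t) (AM.str c ⊗ₜ HM.str f)
      = TensorProduct.map (AM.mul (AM.str a)) (HM.mul.flip (HM.str f))
          (R.mul t (R.twist g c)) := by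
  induction t with
  | zero => simp
  | add s t hs ht => simp only [map_add, LinearMap.add_apply, hs, ht]
  | tmul b h =>
    rw [TensorProduct.map_tmul, mul_tmul_tmul, LinearMap.flip_apply, R.twist_mul_left]
    induction R.twist g c with
    | zero => simp
    | add u v hu hv => simp only [map_add, hu, hv]
    | tmul x y =>
      rw [LinearMap.rTensor_tmul, mul_tmul_tmul]
      induction R.twist h x with
      | zero => simp
      | add u v hu hv => simp only [map_add, TensorProduct.add_tmul, hu, hv]
      | tmul p q => simp [AM.hom_assoc]

theorem mul_hom_assoc (x y z : A ⊗[k] H) :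
    R.mul (TensorProduct.congr AM.str HM.str x) (R.mul y z)
      = R.mul (R.mul x y) (TensorProduct.congr AM.str HM.str z) := by
  induction x with
  | zero => simp
  | add x x' hx hx' => simp only [map_add, LinearMap.add_apply, hx, hx']
  | tmul a h =>
    induction y with
    | zero => simp
    | add y y' hy hy' => simp only [map_add, LinearMap.add_apply, hy, hy']
    | tmul b g =>
      induction z with
      | zero => simp
      | add z z' hz hz' => simp only [map_add, hz, hz']
      | tmul c f =>
        rw [TensorProduct.congr_tmul, TensorProduct.congr_tmul, mul_tmul_tmul, mul_tmul_tmul,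
          mul_str_tmul_map, mul_map_str_tmul]

protected theorem mul_one (x : A ⊗[k] H) :
    R.mul x (AM.one ⊗ₜ HM.one) = TensorProduct.congr AM.str HM.str x := by
  induction x with
  | zero => simp
  | add x x' hx hx' => simp only [map_add, LinearMap.add_apply, hx, hx']
  | tmul a h => simp [mul_tmul_tmul, R.twist_one_right, AM.mul_one, HM.mul_one]

protected theorem one_mul (x : A ⊗[k] H) :
    R.mul (AM.one ⊗ₜ HM.one) x = TensorProduct.congr AM.str HM.str x := by
  induction x with
  | zero => simp
  | add x x' hx hx' => simp only [map_add, hx, hx']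
  | tmul b g => simp [mul_tmul_tmul, R.twist_one_left, AM.one_mul, HM.one_mul]

theorem congr_str_mul (x y : A ⊗[k] H) :
    TensorProduct.congr AM.str HM.str (R.mul x y)
      = R.mul (TensorProduct.congr AM.str HM.str x) (TensorProduct.congr AM.str HM.str y) := by
  induction x with
  | zero => simp
  | add x x' hx hx' => simp only [map_add, LinearMap.add_apply, hx, hx']
  | tmul a h =>
    induction y with
    | zero => simp
    | add y y' hy hy' => simp only [map_add, hy, hy']
    | tmul b g =>
      simp only [TensorProduct.congr_tmul, mul_tmul_tmul, R.twist_str]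
      induction R.twist h b with
      | zero => simp
      | add s t hs ht => simp only [map_add, hs, ht]
      | tmul x y => simp [AM.str_mul, HM.str_mul]

/-- The twisted tensor product of `(A, α)` and `(H, β)` along `R`: the monoidal Hom-algebra
`(A ⊗ H, α ⊗ β)` with multiplication `R.mul`. -/
noncomputable def homAlg : HomAlg k (A ⊗[k] H) where
  mul := R.mul
  one := AM.one ⊗ₜ HM.one
  str := TensorProduct.congr AM.str HM.str
  hom_assoc := R.mul_hom_assoc
  mul_one := R.mul_one
  one_mul := R.one_mul
  str_mul := R.congr_str_mul
  str_one := by rw [TensorProduct.congr_tmul, AM.str_one, HM.str_one]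

end HomTwistingMap

section Smash

variable {k : Type*} [Field k] {A C H M : Type*} [AddCommGroup A] [Module k A] [AddCommGroup C]
  [Module k C] [AddCommGroup H] [Module k H] [AddCommGroup M] [Module k M]

/-- The map `m ⊗ c ↦ λ(c₁) ⊗ (μ⁻¹(m) ◁ c₂)`, as a bilinear map, for a monoidal Hom-coalgebra
`(C, λ)`, an automorphism `μ` of `M` and a bilinear map `◁ : M × C → M`. It is the twisting map of
the smash product. -/
noncomputable def smashTwist (CC : HomCoalg k C) (μ : M ≃ₗ[k] M) (act : M →ₗ[k] C →ₗ[k] M) :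
    M →ₗ[k] C →ₗ[k] C ⊗[k] M :=
  (TensorProduct.mapBilinear (RingHom.id k) C C C M CC.str.toLinearMap ∘ₗ
    act ∘ₗ μ.symm.toLinearMap).compl₂ CC.comul

theorem smashTwist_apply (CC : HomCoalg k C) (μ : M ≃ₗ[k] M) (act : M →ₗ[k] C →ₗ[k] M)
    (m : M) (c : C) :
    smashTwist CC μ act m c
      = TensorProduct.map CC.str.toLinearMap (act (μ.symm m)) (CC.comul c) :=
  rfl

theorem smashTwist_str (CC : HomCoalg k C) (μ : M ≃ₗ[k] M) (act : M →ₗ[k] C →ₗ[k] M)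
    (act_str : ∀ m c, μ (act m c) = act (μ m) (CC.str c)) (m : M) (c : C) :
    smashTwist CC μ act (μ m) (CC.str c)
      = TensorProduct.map CC.str.toLinearMap μ.toLinearMap (smashTwist CC μ act m c) := by
  rw [smashTwist_apply, smashTwist_apply, CC.comul_str]
  induction CC.comul c with
  | zero => simp
  | add s t hs ht => simp only [map_add, hs, ht]
  | tmul c₁ c₂ => simp [act_str]

theorem smashTwist_one_left (CC : HomCoalg k C) (HM : HomAlg k H) (act : H →ₗ[k] C →ₗ[k] H)
    (one_act : ∀ c, act HM.one c = CC.counit c • HM.one) (c : C) :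
    smashTwist CC HM.str act HM.one c = c ⊗ₜ HM.one := by
  have counit_comul : CC.str (TensorProduct.rid k C (CC.counit.lTensor C (CC.comul c))) = c :=
    CC.str.eq_symm_apply.mp (CC.counit_comul_right c)
  rw [smashTwist_apply, HM.str_symm_one]
  nth_rw 2 [← counit_comul]
  induction CC.comul c with
  | zero => simp
  | add s t hs ht => simp only [map_add, TensorProduct.add_tmul, hs, ht]
  | tmul c₁ c₂ => simp [one_act, TensorProduct.smul_tmul']

theorem smashTwist_one_right (AA : HomBialg k A) (μ : M ≃ₗ[k] M) (act : M →ₗ[k] A →ₗ[k] M)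
    (act_one : ∀ m, act m AA.one = μ m) (m : M) :
    smashTwist AA.toHomCoalg μ act m AA.one = AA.one ⊗ₜ m := by
  simp [smashTwist_apply, AA.comul_one, AA.str_one, act_one]

theorem smashTwist_mul_right (AA : HomBialg k A) (μ : M ≃ₗ[k] M) (act : M →ₗ[k] A →ₗ[k] M)
    (hact : IsRightHomModule AA.toHomAlg μ act) (m : M) (a b : A) :
    smashTwist AA.toHomCoalg μ act (μ m) (AA.mul a b)
      = TensorProduct.map (TensorProduct.lift AA.mul) μ.toLinearMap
          ((TensorProduct.assoc k A A M).symm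
            (((smashTwist AA.toHomCoalg μ act).flip b).lTensor A
              (smashTwist AA.toHomCoalg μ act m a))) := by
  obtain ⟨act_act, -, act_str⟩ := hact
  rw [smashTwist_apply, smashTwist_apply, AA.comul_mul]
  induction AA.comul a with
  | zero => simp
  | add s t hs ht => simp only [map_add, TensorProduct.add_tmul, hs, ht]
  | tmul a₁ a₂ =>
    rw [TensorProduct.map_tmul, LinearMap.lTensor_tmul, LinearMap.flip_apply, smashTwist_apply]
    induction AA.comul b with
    | zero => simp
    | add s t hs ht => simp only [map_add, TensorProduct.tmul_add, hs, ht]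
    | tmul b₁ b₂ =>
      have act_mul : act m (AA.mul a₂ b₂) = μ (act (μ.symm (act (μ.symm m) a₂)) b₂) := by
        rw [act_str, μ.apply_symm_apply, act_act, μ.apply_symm_apply]
      simp [AA.str_mul, act_mul]

theorem smashTwist_mul_left (CC : HomCoalg k C) (HM : HomAlg k H) (act : H →ₗ[k] C →ₗ[k] H)
    (mul_act : ∀ h g c, act (HM.mul h g) c
      = TensorProduct.lift HM.mul (TensorProduct.map (act h) (act g) (CC.comul c)))
    (h g : H) (c : C) :
    smashTwist CC HM.str act (HM.mul h g) (CC.str c)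
      = TensorProduct.map CC.str.toLinearMap (TensorProduct.lift HM.mul)
          (TensorProduct.assoc k C H H
            ((smashTwist CC HM.str act h).rTensor H (smashTwist CC HM.str act g c))) := by
  let Ψ : C ⊗[k] (C ⊗[k] C) →ₗ[k] C ⊗[k] H :=
    TensorProduct.map (CC.str.toLinearMap ∘ₗ CC.str.toLinearMap ∘ₗ CC.str.toLinearMap)
      (TensorProduct.lift HM.mul ∘ₗ
        TensorProduct.map (act (HM.str.symm h) ∘ₗ CC.str.toLinearMap)
          (act (HM.str.symm g) ∘ₗ CC.str.toLinearMap))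
  calc smashTwist CC HM.str act (HM.mul h g) (CC.str c)
      = Ψ (TensorProduct.map CC.str.symm.toLinearMap CC.comul (CC.comul c)) := by
        rw [smashTwist_apply, CC.comul_str, HM.str_symm_mul]
        induction CC.comul c with
        | zero => simp
        | add s t hs ht => simp only [map_add, hs, ht]
        | tmul c₁ c₂ => simp [Ψ, mul_act, CC.comul_str, TensorProduct.map_map]
    _ = Ψ (TensorProduct.assoc k C C C
          (TensorProduct.map CC.comul CC.str.symm.toLinearMap (CC.comul c))) := by
        rw [CC.hom_coassoc]
    _ = TensorProduct.map CC.str.toLinearMap (TensorProduct.lift HM.mul)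
          (TensorProduct.assoc k C H H
            ((smashTwist CC HM.str act h).rTensor H (smashTwist CC HM.str act g c))) := by
        rw [smashTwist_apply]
        induction CC.comul c with
        | zero => simp
        | add s t hs ht => simp only [map_add, hs, ht]
        | tmul c₁ c₂ =>
          rw [TensorProduct.map_tmul, TensorProduct.map_tmul, LinearMap.rTensor_tmul,
            LinearEquiv.coe_coe, LinearEquiv.coe_coe, smashTwist_apply, CC.comul_str]
          induction CC.comul c₁ with
          | zero => simp
          | add s t hs ht => simp only [map_add, TensorProduct.add_tmul, hs, ht]
          | tmul c₁₁ c₁₂ => simp [Ψ]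

/-- The twisting map of the smash product, for a right Hom-module algebra. -/
noncomputable def smashTwistingMap (AA : HomBialg k A) (HM : HomAlg k H)
    (act : H →ₗ[k] A →ₗ[k] H) (hact : IsRightHomModuleAlg AA HM act) :
    HomTwistingMap AA.toHomAlg HM where
  twist := smashTwist AA.toHomCoalg HM.str act
  twist_str := smashTwist_str AA.toHomCoalg HM.str act hact.1.2.2
  twist_one_left := smashTwist_one_left AA.toHomCoalg HM act hact.2.2
  twist_one_right := smashTwist_one_right AA HM.str act hact.1.2.1
  twist_mul_right := smashTwist_mul_right AA HM.str act hact.1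
  twist_mul_left := smashTwist_mul_left AA.toHomCoalg HM act hact.2.1

end Smash

/-- If `(A, α)` is a monoidal Hom-bialgebra and the monoidal
Hom-algebra `(H, β)` is a right `(A, α)`-Hom-module algebra via `◁`, then `A ⊗ H`,
with structure map `α ⊗ β`, unit `1_A ⊗ 1_H` and multiplication
`(a # h)(b # g) = a α(b₁) # (β⁻¹(h) ◁ b₂) g`, is a monoidal Hom-algebra
(the right Hom-smash product). -/
theorem right_hom_smash_product_is_hom_algebra
    {k : Type*} [Field k] {A H : Type*}
    [AddCommGroup A] [Module k A] [AddCommGroup H] [Module k H]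
    (AA : HomBialg k A) (HH : HomAlg k H) (act : H →ₗ[k] A →ₗ[k] H)
    (hact : IsRightHomModuleAlg AA HH act) :
    ∃ P : HomAlg k (A ⊗[k] H),
      P.one = AA.one ⊗ₜ[k] HH.one ∧
      P.str = TensorProduct.congr AA.str HH.str ∧
      ∀ a h b g, P.mul (a ⊗ₜ[k] h) (b ⊗ₜ[k] g)
        = TensorProduct.map (AA.mul a ∘ₗ AA.str.toLinearMap)
            (HH.mul.flip g ∘ₗ act (HH.str.symm h)) (AA.comul b) := by
  let R := smashTwistingMap AA HH act hact
  refine ⟨R.homAlg, rfl, rfl, fun a h b g => ?_⟩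
  calc R.mul (a ⊗ₜ h) (b ⊗ₜ g)
      = TensorProduct.map (AA.mul a) (HH.mul.flip g)
          (smashTwist AA.toHomCoalg HH.str act h b) := R.mul_tmul_tmul a h b g
    _ = TensorProduct.map (AA.mul a ∘ₗ AA.str.toLinearMap)
          (HH.mul.flip g ∘ₗ act (HH.str.symm h)) (AA.comul b) := by
      rw [smashTwist_apply, TensorProduct.map_map]
end

section
/- Let (H, β) be a monoidal Hom-Hopf algebra with bijective antipode S and fix an integer n. Then H^op (H with the opposite multiplication and the same unit, comultiplication, counit and automorphism β), equipped with the action ◁ : H^op ⊗ H → H^op defined by x ◁ h = β^{n+1}(S⁻¹(h_2))·(β⁻¹(x)·β^n(h_1)) (products computed in H), is a right (H, β)-Hom-module algebra. -/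
open TensorProduct

/-!
`H^op` is a monoidal Hom-Hopf algebra with antipode `S⁻¹`, and `x ◁ h` is its left adjoint action
`h ▷ x = (h₁ β⁻¹(x)) β(S(h₂))`, pulled back along the bialgebra automorphism `βⁿ`; a left module
algebra over `H^op` is a right one over `H`.

That the adjoint action makes a monoidal Hom-Hopf algebra a module algebra over itself reduces to
the classical case: `β⁻¹(ab)` and `Δ ∘ β` form an ordinary Hopf algebra with the same antipode. For
an ordinary Hopf algebra, `a ↦ a₁ x S(a₂)` is the conjugate of `a ↦ ε(a) x` by the identity, a unit
of the convolution algebra with inverse `S`; conjugation is multiplicative, and so is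
`x ↦ ε(·) x`.
-/

section AdjointAction

open Coalgebra HopfAlgebra LinearMap WithConv

variable {R : Type*} [CommSemiring R]

section Convolution

variable {C A : Type*} [AddCommMonoid C] [Module R C] [Coalgebra R C] [Semiring A] [Algebra R A]

lemma toConv_mul_toConv_counit_smulRight (f : C →ₗ[R] A) (x : A) :
    toConv f * toConv (counit.smulRight x) = toConv (mulRight R x ∘ₗ f) := by
  ext c
  have h (t : C ⊗[R] C) : mul' R A (TensorProduct.map f (counit.smulRight x) t) =
      f (TensorProduct.rid R C (counit.lTensor C t)) * x := by
    induction t with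
    | zero => simp
    | add t t' ht ht' => simp only [map_add, ht, ht', add_mul]
    | tmul a b => simp
  simp [h]

lemma toConv_counit_smulRight_mul (x y : A) :
    toConv ((counit (R := R) (A := C)).smulRight (x * y)) =
      toConv (counit.smulRight x) * toConv (counit.smulRight y) := by
  rw [toConv_mul_toConv_counit_smulRight]
  ext c
  simp

lemma toConv_counit_smulRight_one :
    toConv ((counit (R := R) (A := C)).smulRight (1 : A)) = 1 := by
  ext c
  simp [Algebra.algebraMap_eq_smul_one]

end Convolution

variable (R) {A : Type*} [Semiring A] [HopfAlgebra R A]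

/-- The left adjoint action `a ▷ x = a₁ x S(a₂)` of a Hopf algebra on itself, encoded as the
representation obtained by restricting the action `a ⊗ b ↦ (x ↦ a x b)` of `A ⊗ Aᵐᵒᵖ` along the
algebra map `a ↦ a₁ ⊗ S(a₂)`. -/
noncomputable def adjointAction : A →ₐ[R] Module.End R A :=
  (AlgHom.mulLeftRight R A).comp
    ((Algebra.TensorProduct.map (AlgHom.id R A) (antipodeAlgHomOp R A)).comp
      (Bialgebra.comulAlgHom R A))

lemma adjointAction_apply (a x : A) :
    adjointAction R a x =
      mul' R A (TensorProduct.map (mulRight R x) (antipode R) (comul a)) := by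
  have h (t : A ⊗[R] A) : AlgHom.mulLeftRight R A
      (Algebra.TensorProduct.map (AlgHom.id R A) (antipodeAlgHomOp R A) t) x =
      mul' R A (TensorProduct.map (mulRight R x) (antipode R) t) := by
    induction t with
    | zero => simp
    | add t t' ht ht' => simp only [map_add, LinearMap.add_apply, ht, ht']
    | tmul a b => simp
  exact h (comul a)

/-- The identity of a Hopf algebra as a unit of the convolution algebra, with the antipode as its
inverse. -/
noncomputable def convIdUnit : (WithConv (A →ₗ[R] A))ˣ :=
  ⟨toConv LinearMap.id, toConv (antipode R), id_mul_antipode, antipode_mul_id⟩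

lemma toConv_flip_adjointAction (x : A) :
    toConv ((adjointAction R).toLinearMap.flip x) =
      ConjAct.toConjAct (convIdUnit R (A := A)) • toConv (counit.smulRight x) := by
  have h : toConv LinearMap.id * toConv (counit.smulRight x) * toConv (antipode R) =
      toConv ((adjointAction R).toLinearMap.flip x) := by
    rw [toConv_mul_toConv_counit_smulRight]
    ext a
    simp [adjointAction_apply]
  exact h.symm

lemma adjointAction_mul (a x y : A) :
    adjointAction R a (x * y) = mul' R A
      (TensorProduct.map ((adjointAction R).toLinearMap.flip x)
        ((adjointAction R).toLinearMap.flip y) (comul a)) := by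
  have h : toConv ((adjointAction R).toLinearMap.flip (x * y)) =
      toConv ((adjointAction R).toLinearMap.flip x) *
        toConv ((adjointAction R).toLinearMap.flip y) := by
    simp only [toConv_flip_adjointAction, toConv_counit_smulRight_mul, smul_mul']
  exact congr($h a)

lemma adjointAction_one (a : A) :
    adjointAction R a 1 = algebraMap R A (counit a) := by
  have h : toConv ((adjointAction R).toLinearMap.flip (1 : A)) = 1 := by
    rw [toConv_flip_adjointAction, toConv_counit_smulRight_one, smul_one]
  exact congr($h a)

end AdjointAction

section Untwist

variable {k : Type*} [Field k] {H : Type*} [AddCommGroup H] [Module k H]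

namespace HomAlg

variable (AA : HomAlg k H)

lemma str_symm_mul_s2 (a b : H) :
    AA.str.symm (AA.mul a b) = AA.mul (AA.str.symm a) (AA.str.symm b) := by
  simp [LinearEquiv.symm_apply_eq, AA.str_mul]

/-- The product `α⁻¹(a b)`, which is associative because the twist in the Hom-associativity of
`(A, α)` is undone. -/
def untwistMul : H →ₗ[k] H →ₗ[k] H := AA.mul.compr₂ AA.str.symm.toLinearMap

/-- The associative ring underlying a monoidal Hom-algebra, with product `HomAlg.untwistMul`. -/
abbrev untwistRing : Ring H where
  __ := ‹AddCommGroup H›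
  mul a b := AA.untwistMul a b
  one := AA.one
  left_distrib a b c := by
    change AA.untwistMul a (b + c) = AA.untwistMul a b + AA.untwistMul a c
    exact map_add _ b c
  right_distrib a b c := by
    change AA.untwistMul (a + b) c = AA.untwistMul a c + AA.untwistMul b c
    exact AA.untwistMul.map_add₂ a b c
  zero_mul a := by
    change AA.untwistMul 0 a = 0
    exact AA.untwistMul.map_zero₂ a
  mul_zero a := by
    change AA.untwistMul a 0 = 0
    exact map_zero _
  mul_assoc a b c := by
    change AA.untwistMul (AA.untwistMul a b) c = AA.untwistMul a (AA.untwistMul b c)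
    simpa [untwistMul, AA.str_symm_mul_s2] using
      congrArg AA.str.symm (AA.hom_assoc (AA.str.symm a) (AA.str.symm b) (AA.str.symm c)).symm
  one_mul a := AA.str.symm_apply_eq.2 (AA.one_mul a)
  mul_one a := AA.str.symm_apply_eq.2 (AA.mul_one a)

/-- The `k`-algebra structure on `HomAlg.untwistRing`. -/
abbrev untwistAlgebra : letI := AA.untwistRing; Algebra k H :=
  letI := AA.untwistRing
  Algebra.ofModule (fun r a b ↦ AA.untwistMul.map_smul₂ r a b)
    (fun r a b ↦ (AA.untwistMul a).map_smul r b)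

lemma mul_eq_str_untwistMul (a b : H) : AA.mul a b = AA.str (AA.untwistMul a b) :=
  (AA.str.apply_symm_apply _).symm

lemma untwistMul_str_str (a b : H) : AA.untwistMul (AA.str a) (AA.str b) = AA.mul a b := by
  simp [untwistMul, AA.str_symm_mul_s2]

lemma lift_mul_map_str (t : H ⊗[k] H) :
    TensorProduct.lift AA.mul (TensorProduct.map AA.str.toLinearMap AA.str.toLinearMap t) =
      AA.str (TensorProduct.lift AA.mul t) := by
  induction t with
  | zero => simp
  | add t t' ht ht' => simp only [map_add, ht, ht']
  | tmul a b => exact (AA.str_mul a b).symm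

lemma lift_mul_eq_str_mul' (t : H ⊗[k] H) :
    letI := AA.untwistRing
    letI := AA.untwistAlgebra
    TensorProduct.lift AA.mul t = AA.str (LinearMap.mul' k H t) := by
  let := AA.untwistRing
  let := AA.untwistAlgebra
  induction t with
  | zero => simp
  | add t t' ht ht' => simp only [map_add, ht, ht']
  | tmul a b => exact AA.mul_eq_str_untwistMul a b

lemma mul'_map_str (t : H ⊗[k] H) :
    letI := AA.untwistRing
    letI := AA.untwistAlgebra
    LinearMap.mul' k H (TensorProduct.map AA.str.toLinearMap AA.str.toLinearMap t) =
      TensorProduct.lift AA.mul t := by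
  let := AA.untwistRing
  let := AA.untwistAlgebra
  apply AA.str.injective
  rw [← AA.lift_mul_eq_str_mul', AA.lift_mul_map_str]

end HomAlg

namespace HomCoalg

variable (CC : HomCoalg k H)

/-- The coassociative coalgebra underlying a monoidal Hom-coalgebra `(C, λ)`, with
comultiplication `Δ ∘ λ`. -/
noncomputable abbrev untwistCoalgebra : Coalgebra k H where
  comul := CC.comul ∘ₗ CC.str.toLinearMap
  counit := CC.counit
  coassoc := by
    ext c
    have rTensor_comul : (CC.comul ∘ₗ CC.str.toLinearMap).rTensor H (CC.comul (CC.str c)) =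
        TensorProduct.map CC.comul CC.str.symm.toLinearMap (CC.comul (CC.str (CC.str c))) := by
      rw [CC.comul_str (CC.str c), TensorProduct.map_map, LinearMap.rTensor]
      simp
    have lTensor_comul : (CC.comul ∘ₗ CC.str.toLinearMap).lTensor H (CC.comul (CC.str c)) =
        TensorProduct.map CC.str.symm.toLinearMap CC.comul (CC.comul (CC.str (CC.str c))) := by
      rw [CC.comul_str (CC.str c), TensorProduct.map_map, LinearMap.lTensor]
      simp
    change TensorProduct.assoc k H H H (_) = _
    exact (congrArg _ rTensor_comul).trans ((CC.hom_coassoc _).symm.trans lTensor_comul.symm)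
  rTensor_counit_comp_comul := by
    ext c
    apply (TensorProduct.lid k H).injective
    simpa [LinearMap.rTensor] using CC.counit_comul_left (CC.str c)
  lTensor_counit_comp_comul := by
    ext c
    apply (TensorProduct.rid k H).injective
    simpa [LinearMap.lTensor] using CC.counit_comul_right (CC.str c)

end HomCoalg

namespace HomBialg

variable (HB : HomBialg k H)

lemma counit_untwistMul (a b : H) :
    HB.counit (HB.untwistMul a b) = HB.counit a * HB.counit b := by
  rw [← HB.counit_str, ← HB.mul_eq_str_untwistMul, HB.counit_mul]

lemma map_str_mul_map_str (s t : H ⊗[k] H) :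
    letI := HB.untwistRing
    letI := HB.untwistAlgebra
    TensorProduct.map HB.str.toLinearMap HB.str.toLinearMap s *
        TensorProduct.map HB.str.toLinearMap HB.str.toLinearMap t =
      TensorProduct.map (TensorProduct.lift HB.mul) (TensorProduct.lift HB.mul)
        (TensorProduct.tensorTensorTensorComm k H H H H (s ⊗ₜ[k] t)) := by
  let := HB.untwistRing
  let := HB.untwistAlgebra
  induction s with
  | zero => simp
  | add s s' hs hs' => simp only [add_tmul, map_add, add_mul, hs, hs']
  | tmul a b =>
    induction t with
    | zero => simp
    | add t t' ht ht' => simp only [tmul_add, map_add, mul_add, ht, ht']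
    | tmul c d =>
      exact (Algebra.TensorProduct.tmul_mul_tmul ..).trans
        (congrArg₂ (· ⊗ₜ[k] ·) (HB.untwistMul_str_str a c) (HB.untwistMul_str_str b d))

/-- The bialgebra underlying a monoidal Hom-bialgebra. -/
noncomputable abbrev untwistBialgebra : letI := HB.untwistRing; Bialgebra k H :=
  letI := HB.untwistRing
  letI := HB.untwistAlgebra
  letI := HB.untwistCoalgebra
  Bialgebra.mk' k H HB.counit_one (HB.counit_untwistMul _ _)
    ((congrArg HB.comul HB.str_one).trans HB.comul_one)
    (fun {a b} ↦ by
      change HB.comul (HB.str (HB.untwistMul a b)) = HB.comul (HB.str a) * HB.comul (HB.str b)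
      rw [← HB.mul_eq_str_untwistMul, HB.comul_mul, HB.comul_str, HB.comul_str,
        HB.map_str_mul_map_str])

end HomBialg

namespace HomHopf

variable (HH : HomHopf k H)

lemma mul'_map_comul_str (f g : H →ₗ[k] H) (hf : ∀ h, HH.str (f h) = f (HH.str h))
    (hg : ∀ h, HH.str (g h) = g (HH.str h)) (h : H) :
    letI := HH.untwistRing
    letI := HH.untwistAlgebra
    LinearMap.mul' k H (TensorProduct.map f g (HH.comul (HH.str h))) =
      TensorProduct.lift HH.mul (TensorProduct.map f g (HH.comul h)) := by
  have hf' : f ∘ₗ HH.str.toLinearMap = HH.str.toLinearMap ∘ₗ f :=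
    LinearMap.ext fun h ↦ (hf h).symm
  have hg' : g ∘ₗ HH.str.toLinearMap = HH.str.toLinearMap ∘ₗ g :=
    LinearMap.ext fun h ↦ (hg h).symm
  rw [HH.comul_str, TensorProduct.map_map, hf', hg', ← TensorProduct.map_map, HH.mul'_map_str]

/-- The Hopf algebra underlying a monoidal Hom-Hopf algebra. -/
noncomputable abbrev untwistHopfAlgebra : letI := HH.untwistRing; HopfAlgebra k H :=
  letI := HH.untwistRing
  letI := HH.untwistBialgebra
  { antipode := HH.S
    mul_antipode_rTensor_comul := by
      ext h
      exact (HH.mul'_map_comul_str HH.S LinearMap.id HH.S_str (fun _ ↦ rfl) h).trans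
        ((HH.S_mul_left h).trans (Algebra.algebraMap_eq_smul_one _).symm)
    mul_antipode_lTensor_comul := by
      ext h
      exact (HH.mul'_map_comul_str LinearMap.id HH.S (fun _ ↦ rfl) HH.S_str h).trans
        ((HH.S_mul_right h).trans (Algebra.algebraMap_eq_smul_one _).symm) }

end HomHopf

end Untwist

section HomAdjoint

variable {k : Type*} [Field k] {H : Type*} [AddCommGroup H] [Module k H]

namespace HomHopf

variable (HH : HomHopf k H)

lemma S_mul (a b : H) : HH.S (HH.mul a b) = HH.mul (HH.S b) (HH.S a) := by
  let := HH.untwistRing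
  let := HH.untwistHopfAlgebra
  have h : HH.S (HH.untwistMul (HH.str a) (HH.str b)) =
      HH.untwistMul (HH.S (HH.str b)) (HH.S (HH.str a)) :=
    HopfAlgebra.antipode_mul_antidistrib (R := k) (HH.str a) (HH.str b)
  rwa [← HH.S_str, ← HH.S_str, HH.untwistMul_str_str, HH.untwistMul_str_str] at h

lemma S_one : HH.S HH.one = HH.one := by
  let := HH.untwistRing
  let := HH.untwistHopfAlgebra
  exact HopfAlgebra.antipode_one (R := k) (A := H)

/-- The left adjoint action of a monoidal Hom-Hopf algebra on itself: the adjoint action of the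
underlying Hopf algebra, followed by the structure automorphism. -/
noncomputable def adjoint : H →ₗ[k] H →ₗ[k] H :=
  letI := HH.untwistRing
  letI := HH.untwistHopfAlgebra
  (adjointAction k).toLinearMap.compr₂ HH.str.toLinearMap

lemma adjoint_apply (h x : H) :
    HH.adjoint h x = TensorProduct.lift HH.mul
      (TensorProduct.map (HH.mul.flip (HH.str.symm x)) (HH.str.toLinearMap ∘ₗ HH.S)
        (HH.comul h)) := by
  let := HH.untwistRing
  let := HH.untwistHopfAlgebra
  have str_untwisted_adjoint (t : H ⊗[k] H) :
      HH.str (LinearMap.mul' k H (TensorProduct.map (LinearMap.mulRight k x) HH.S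
        (TensorProduct.map HH.str.toLinearMap HH.str.toLinearMap t))) =
      TensorProduct.lift HH.mul (TensorProduct.map (HH.mul.flip (HH.str.symm x))
        (HH.str.toLinearMap ∘ₗ HH.S) t) := by
    induction t with
    | zero => simp
    | add t t' ht ht' => simp only [map_add, ht, ht']
    | tmul a b =>
      change HH.str (HH.untwistMul (HH.untwistMul (HH.str a) x) (HH.S (HH.str b))) =
        HH.mul (HH.mul a (HH.str.symm x)) (HH.str (HH.S b))
      rw [← HH.mul_eq_str_untwistMul, HH.S_str, ← HH.untwistMul_str_str a,
        HH.str.apply_symm_apply]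
  rw [← str_untwisted_adjoint, ← HH.comul_str]
  exact congrArg HH.str (adjointAction_apply (R := k) h x)

lemma str_adjoint (h x : H) :
    HH.str (HH.adjoint h x) = HH.adjoint (HH.str h) (HH.str x) := by
  have str_lift_mul (t : H ⊗[k] H) :
      HH.str (TensorProduct.lift HH.mul (TensorProduct.map (HH.mul.flip (HH.str.symm x))
        (HH.str.toLinearMap ∘ₗ HH.S) t)) =
      TensorProduct.lift HH.mul (TensorProduct.map (HH.mul.flip x)
        (HH.str.toLinearMap ∘ₗ HH.S)
        (TensorProduct.map HH.str.toLinearMap HH.str.toLinearMap t)) := by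
    induction t with
    | zero => simp
    | add t t' ht ht' => simp only [map_add, ht, ht']
    | tmul a b => simp [HH.str_mul, HH.S_str]
  rw [adjoint_apply, str_lift_mul, adjoint_apply, HH.comul_str, HH.str.symm_apply_apply]

lemma adjoint_str_adjoint (h g x : H) :
    HH.adjoint (HH.str h) (HH.adjoint g x) = HH.adjoint (HH.mul h g) (HH.str x) := by
  let := HH.untwistRing
  let := HH.untwistHopfAlgebra
  have str_adjointAction : HH.str (adjointAction k g x) = adjointAction k (HH.str g) (HH.str x) :=
    HH.str.injective (HH.str_adjoint g x)
  calc HH.adjoint (HH.str h) (HH.adjoint g x)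
      = HH.str (adjointAction k (HH.str h) (adjointAction k (HH.str g) (HH.str x))) :=
        congr(HH.str (adjointAction k (HH.str h) $str_adjointAction))
    _ = HH.adjoint (HH.untwistMul (HH.str h) (HH.str g)) (HH.str x) :=
        congr(HH.str ($(map_mul (adjointAction k) (HH.str h) (HH.str g)) (HH.str x))).symm
    _ = HH.adjoint (HH.mul h g) (HH.str x) := by rw [HH.untwistMul_str_str]

lemma one_adjoint (x : H) : HH.adjoint HH.one x = HH.str x := by
  let := HH.untwistRing
  let := HH.untwistHopfAlgebra
  exact congr(HH.str ($(map_one (adjointAction k)) x))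

lemma adjoint_mul (h x y : H) :
    HH.adjoint h (HH.mul x y) = TensorProduct.lift HH.mul
      (TensorProduct.map (HH.adjoint.flip x) (HH.adjoint.flip y) (HH.comul h)) := by
  let := HH.untwistRing
  let := HH.untwistHopfAlgebra
  let ad := (adjointAction (A := H) k).toLinearMap
  have ad_untwistMul : ad (HH.str.symm h) (HH.untwistMul x y) =
      LinearMap.mul' k H (TensorProduct.map (ad.flip x) (ad.flip y) (HH.comul h)) := by
    conv_rhs => rw [← HH.str.apply_symm_apply h]
    exact adjointAction_mul (R := k) (HH.str.symm h) x y
  calc HH.adjoint h (HH.mul x y)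
      = HH.str (HH.adjoint (HH.str.symm h) (HH.untwistMul x y)) := by
        rw [str_adjoint, HH.str.apply_symm_apply, HH.mul_eq_str_untwistMul]
    _ = HH.str (HH.str (LinearMap.mul' k H
          (TensorProduct.map (ad.flip x) (ad.flip y) (HH.comul h)))) :=
        congr(HH.str (HH.str $ad_untwistMul))
    _ = TensorProduct.lift HH.mul
          (TensorProduct.map (HH.adjoint.flip x) (HH.adjoint.flip y) (HH.comul h)) := by
        rw [← HH.lift_mul_eq_str_mul', ← HH.lift_mul_map_str, TensorProduct.map_map]
        rfl

lemma adjoint_one (h : H) : HH.adjoint h HH.one = HH.counit h • HH.one := by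
  let := HH.untwistRing
  let := HH.untwistHopfAlgebra
  calc HH.adjoint h HH.one
      = HH.str (HH.counit h • HH.one) :=
        congrArg HH.str ((adjointAction_one (R := k) h).trans
          (Algebra.algebraMap_eq_smul_one _))
    _ = HH.counit h • HH.one := by rw [map_smul, HH.str_one]

theorem adjoint_isLeftHomModuleAlg :
    IsLeftHomModuleAlg HH.toHomBialg HH.toHomAlg HH.adjoint :=
  ⟨⟨HH.adjoint_str_adjoint, HH.one_adjoint, HH.str_adjoint⟩, HH.adjoint_mul, HH.adjoint_one⟩

end HomHopf

end HomAdjoint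

section Opposite

variable {k : Type*} [Field k] {H : Type*} [AddCommGroup H] [Module k H]

/-- The opposite monoidal Hom-algebra. -/
def HomAlg.op (AA : HomAlg k H) : HomAlg k H where
  mul := AA.mul.flip
  one := AA.one
  str := AA.str
  hom_assoc a b c := (AA.hom_assoc c b a).symm
  mul_one := AA.one_mul
  one_mul := AA.mul_one
  str_mul a b := AA.str_mul b a
  str_one := AA.str_one

/-- The opposite monoidal Hom-bialgebra, with opposite product and the same coproduct. -/
def HomBialg.op (HB : HomBialg k H) : HomBialg k H where
  toHomAlg := HB.toHomAlg.op
  __ := HB.toHomCoalg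
  comul_mul a b := by
    have lift_mul_swap (s t : H ⊗[k] H) :
        TensorProduct.map (TensorProduct.lift HB.mul) (TensorProduct.lift HB.mul)
          (TensorProduct.tensorTensorTensorComm k H H H H (t ⊗ₜ[k] s)) =
        TensorProduct.map (TensorProduct.lift HB.mul.flip) (TensorProduct.lift HB.mul.flip)
          (TensorProduct.tensorTensorTensorComm k H H H H (s ⊗ₜ[k] t)) := by
      induction s with
      | zero => simp
      | add s s' hs hs' => simp only [add_tmul, tmul_add, map_add, hs, hs']
      | tmul a b =>
        induction t with
        | zero => simp
        | add t t' ht ht' => simp only [add_tmul, tmul_add, map_add, ht, ht']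
        | tmul c d => simp
    exact (HB.comul_mul b a).trans (lift_mul_swap _ _)
  comul_one := HB.comul_one
  counit_mul a b := (HB.counit_mul b a).trans (mul_comm _ _)
  counit_one := HB.counit_one

namespace HomHopf

variable (HH : HomHopf k H) {T : H →ₗ[k] H}

lemma str_antipode_inv (hTS : Function.LeftInverse T HH.S) (hST : Function.RightInverse T HH.S)
    (h : H) : HH.str (T h) = T (HH.str h) :=
  hTS.injective.eq_iff.1 (by rw [← HH.S_str, hST, hST])

/-- The opposite of a monoidal Hom-Hopf algebra whose antipode has inverse `T`, with `T` as its
antipode. -/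
def op (hTS : Function.LeftInverse T HH.S) (hST : Function.RightInverse T HH.S) :
    HomHopf k H where
  toHomBialg := HH.toHomBialg.op
  S := T
  S_str := HH.str_antipode_inv hTS hST
  S_mul_left h := by
    have S_lift_flip (t : H ⊗[k] H) :
        HH.S (TensorProduct.lift HH.mul.flip (TensorProduct.map T LinearMap.id t)) =
          TensorProduct.lift HH.mul (TensorProduct.map LinearMap.id HH.S t) := by
      induction t with
      | zero => simp
      | add t t' ht ht' => simp only [map_add, ht, ht']
      | tmul a b => simp [HH.S_mul, hST a]
    apply hTS.injective
    calc HH.S (TensorProduct.lift HH.mul.flip (TensorProduct.map T LinearMap.id (HH.comul h)))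
        = HH.counit h • HH.one := (S_lift_flip _).trans (HH.S_mul_right h)
      _ = HH.S (HH.counit h • HH.one) := by rw [map_smul, HH.S_one]
  S_mul_right h := by
    have S_lift_flip (t : H ⊗[k] H) :
        HH.S (TensorProduct.lift HH.mul.flip (TensorProduct.map LinearMap.id T t)) =
          TensorProduct.lift HH.mul (TensorProduct.map HH.S LinearMap.id t) := by
      induction t with
      | zero => simp
      | add t t' ht ht' => simp only [map_add, ht, ht']
      | tmul a b => simp [HH.S_mul, hST b]
    apply hTS.injective
    calc HH.S (TensorProduct.lift HH.mul.flip (TensorProduct.map LinearMap.id T (HH.comul h)))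
        = HH.counit h • HH.one := (S_lift_flip _).trans (HH.S_mul_left h)
      _ = HH.S (HH.counit h • HH.one) := by rw [map_smul, HH.S_one]

lemma str_zpow_add_one_comp_antipode_inv (hTS : Function.LeftInverse T HH.S)
    (hST : Function.RightInverse T HH.S) (n : ℤ) :
    (HH.str ^ (n + 1)).toLinearMap ∘ₗ T =
      HH.str.toLinearMap ∘ₗ T ∘ₗ (HH.str ^ n).toLinearMap := by
  have hT : Commute HH.str
      (LinearEquiv.ofLinearMap T HH.S (LinearMap.ext hTS) (LinearMap.ext hST)) :=
    LinearEquiv.ext (HH.str_antipode_inv hTS hST)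
  ext h
  calc (HH.str ^ (n + 1)) (T h)
      = HH.str ((HH.str ^ n) (T h)) := by rw [add_comm, zpow_one_add, LinearEquiv.mul_apply]
    _ = HH.str (T ((HH.str ^ n) h)) := congr(HH.str ($((hT.zpow_left n).eq) h))

end HomHopf

lemma IsLeftHomModuleAlg.flip {A : Type*} [AddCommGroup A] [Module k A] {HB : HomBialg k H}
    {AM : HomAlg k A} {act : H →ₗ[k] A →ₗ[k] A} (h : IsLeftHomModuleAlg HB.op AM act) :
    IsRightHomModuleAlg HB AM act.flip :=
  ⟨⟨fun m a b ↦ h.1.1 b a m, h.1.2.1, fun m a ↦ h.1.2.2 a m⟩, fun x y a ↦ h.2.1 a x y, h.2.2⟩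

end Opposite

section Morphism

variable {k : Type*} [Field k] {A B H : Type*} [AddCommGroup A] [Module k A]
  [AddCommGroup B] [Module k B] [AddCommGroup H] [Module k H]

/-- `f` is a morphism of monoidal Hom-bialgebras. -/
structure IsHomBialgHom (AB : HomBialg k A) (HB : HomBialg k H) (f : A →ₗ[k] H) : Prop where
  map_mul : ∀ a b, f (AB.mul a b) = HB.mul (f a) (f b)
  map_one : f AB.one = HB.one
  map_str : ∀ a, f (AB.str a) = HB.str (f a)
  comul_map : ∀ a, HB.comul (f a) = TensorProduct.map f f (AB.comul a)
  counit_map : ∀ a, HB.counit (f a) = AB.counit a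

namespace IsHomBialgHom

variable {AB : HomBialg k A} {BB : HomBialg k B} {HB : HomBialg k H}

lemma id : IsHomBialgHom HB HB LinearMap.id where
  map_mul _ _ := rfl
  map_one := rfl
  map_str _ := rfl
  comul_map _ := by simp
  counit_map _ := rfl

lemma comp {g : B →ₗ[k] H} {f : A →ₗ[k] B} (hg : IsHomBialgHom BB HB g)
    (hf : IsHomBialgHom AB BB f) : IsHomBialgHom AB HB (g ∘ₗ f) where
  map_mul a b := by simp [hf.map_mul, hg.map_mul]
  map_one := by simp [hf.map_one, hg.map_one]
  map_str a := by simp [hf.map_str, hg.map_str]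
  comul_map a := by simp [hf.comul_map, hg.comul_map, TensorProduct.map_map]
  counit_map a := by simp [hf.counit_map, hg.counit_map]

lemma symm {e : A ≃ₗ[k] H} (he : IsHomBialgHom AB HB e.toLinearMap) :
    IsHomBialgHom HB AB e.symm.toLinearMap where
  map_mul a b := e.symm_apply_eq.2 <| by
    simpa using (he.map_mul (e.symm a) (e.symm b)).symm
  map_one := e.symm_apply_eq.2 he.map_one.symm
  map_str a := e.symm_apply_eq.2 <| by simpa using (he.map_str (e.symm a)).symm
  comul_map a := by
    have h := he.comul_map (e.symm a)
    simp only [LinearEquiv.coe_coe, e.apply_symm_apply] at h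
    simp [h, TensorProduct.map_map]
  counit_map a := by simpa using (he.counit_map (e.symm a)).symm

variable (HB) in
lemma str : IsHomBialgHom HB HB HB.str.toLinearMap :=
  ⟨HB.str_mul, HB.str_one, fun _ ↦ rfl, HB.comul_str, HB.counit_str⟩

variable (HB) in
lemma str_zpow (n : ℤ) : IsHomBialgHom HB HB (HB.str ^ n).toLinearMap := by
  induction n using Int.inductionOn' (b := 0) with
  | zero => exact id
  | succ n _ h =>
    rw [zpow_add_one]
    exact h.comp (str HB)
  | pred n _ h =>
    rw [zpow_sub_one]
    exact h.comp (str HB).symm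

end IsHomBialgHom

lemma IsRightHomModuleAlg.compl₂ {AB : HomBialg k A} {BB : HomBialg k B} {AM : HomAlg k H}
    {act : H →ₗ[k] B →ₗ[k] H} (h : IsRightHomModuleAlg BB AM act) {f : A →ₗ[k] B}
    (hf : IsHomBialgHom AB BB f) : IsRightHomModuleAlg AB AM (act.compl₂ f) := by
  obtain ⟨⟨act_act, act_one, str_act⟩, mul_act, one_act⟩ := h
  refine ⟨⟨fun m a b ↦ ?_, fun m ↦ ?_, fun m a ↦ ?_⟩, fun x y a ↦ ?_, fun a ↦ ?_⟩
  · simp [hf.map_str, hf.map_mul, act_act]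
  · simp [hf.map_one, act_one]
  · simp [hf.map_str, str_act]
  · simp only [LinearMap.compl₂_apply, mul_act, hf.comul_map, TensorProduct.map_map]
    rfl
  · simp [one_act, hf.counit_map]

end Morphism

theorem op_is_right_hom_module_algebra_general
    {k : Type*} [Field k] {A H : Type*} [AddCommGroup A] [Module k A] [AddCommGroup H] [Module k H]
    (HH : HomHopf k H) {Sinv : H →ₗ[k] H} (hS₁ : ∀ h, Sinv (HH.S h) = h)
    (hS₂ : ∀ h, HH.S (Sinv h) = h) {AB : HomBialg k A} {φ : A →ₗ[k] H}
    (hφ : IsHomBialgHom AB HH.toHomBialg φ) :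
    ∃ act : H →ₗ[k] A →ₗ[k] H,
      (∀ x a, act x a
        = TensorProduct.lift HH.mul (TensorProduct.comm k H H
            (TensorProduct.map (HH.mul (HH.str.symm x) ∘ₗ φ)
              (HH.str.toLinearMap ∘ₗ Sinv ∘ₗ φ) (AB.comul a)))) ∧
      IsRightHomModuleAlg AB HH.toHomAlg.op act := by
  have hop := (HH.op hS₁ hS₂).adjoint_isLeftHomModuleAlg
  refine ⟨(HH.op hS₁ hS₂).adjoint.flip.compl₂ φ, fun x a ↦ ?_,
    IsRightHomModuleAlg.compl₂ (IsLeftHomModuleAlg.flip hop) hφ⟩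
  calc (HH.op hS₁ hS₂).adjoint (φ a) x
      = TensorProduct.lift HH.mul.flip (TensorProduct.map (HH.mul (HH.str.symm x))
          (HH.str.toLinearMap ∘ₗ Sinv) (HH.comul (φ a))) :=
        (HH.op hS₁ hS₂).adjoint_apply (φ a) x
    _ = _ := by
      rw [hφ.comul_map, TensorProduct.map_map, ← TensorProduct.lift_comp_comm_eq]
      rfl

/-- Let `(H, β)` be a monoidal Hom-Hopf algebra with bijective
antipode `S` and `n : ℤ`.  Then `H^op` (the same space with opposite multiplication,
same unit and structure map), equipped with the action
`x ◁ h = β^{n+1}(S⁻¹(h₂)) · (β⁻¹(x) · βⁿ(h₁))` (products in `H`), is a right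
`(H, β)`-Hom-module algebra. -/
theorem op_is_right_hom_module_algebra
    {k : Type*} [Field k] {H : Type*} [AddCommGroup H] [Module k H]
    (HH : HomHopf k H) (Sinv : H →ₗ[k] H)
    (hS₁ : ∀ h, Sinv (HH.S h) = h) (hS₂ : ∀ h, HH.S (Sinv h) = h) (n : ℤ) :
    ∃ Hop : HomAlg k H,
      Hop.mul = HH.mul.flip ∧ Hop.one = HH.one ∧ Hop.str = HH.str ∧
      ∃ act : H →ₗ[k] H →ₗ[k] H,
        (∀ x h, act x h
          = TensorProduct.lift HH.mul (TensorProduct.comm k H H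
              (TensorProduct.map
                (HH.mul (HH.str.symm x) ∘ₗ (HH.str ^ n).toLinearMap)
                ((HH.str ^ (n + 1)).toLinearMap ∘ₗ Sinv) (HH.comul h)))) ∧
        IsRightHomModuleAlg HH.toHomBialg Hop act := by
  refine ⟨HH.toHomAlg.op, rfl, rfl, rfl, ?_⟩
  rw [HH.str_zpow_add_one_comp_antipode_inv hS₁ hS₂]
  exact op_is_right_hom_module_algebra_general HH hS₁ hS₂ (.str_zpow _ n)
end

section
/- Let (H, β, ζ) be a coquasitriangular monoidal Hom-Hopf algebra. Then the bilinear form σ : H ⊗ H → k defined by σ(h, g) = ζ(g, h) is a left monoidal Hom-2-cocycle on (H, β): σ(β(h), β(g)) = σ(h, g) and σ(h_1, g_1)σ(h_2g_2, k) = σ(g_1, k_1)σ(h, g_2k_2) for all h, g, k ∈ H. -/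
open TensorProduct

/-! Multiplying out with (5.3) and (5.4), the right side of the cocycle identity for
`σ(h, g) = ζ(g, h)` is `ζ(c₁, g₁) ζ(c₂, h₁) ζ(g₂, h₂)`. The left side is
`ζ(g₁, h₁) ζ(c, h₂ g₂)`; by (5.2) it equals `ζ(c, g₁ h₁) ζ(g₂, h₂)`, and (5.3) turns this into
the same product. -/

section Convolution

variable {k : Type*} [Field k] {C D E : Type*}
  [AddCommGroup C] [Module k C] [AddCommGroup D] [Module k D] [AddCommGroup E] [Module k E]

theorem convD_apply_eq_sum (CC : HomCoalg k C) (u v : Module.Dual k C) {c : C}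
    {s : Finset (C × C)} (hc : CC.comul c = ∑ i ∈ s, i.1 ⊗ₜ[k] i.2) :
    convD CC u v c = ∑ i ∈ s, u i.1 * v i.2 := by
  simp [convD, hc]

theorem convD_apply_str (CC : HomCoalg k C) (u v : Module.Dual k C) (c : C) :
    convD CC u v (CC.str c) = convD CC (u ∘ₗ CC.str) (v ∘ₗ CC.str) c := by
  simp [convD, CC.comul_str, TensorProduct.map_map]

/-- The convolution product `(u ⋆ v)(c, d) = u(c₁, d₁) v(c₂, d₂)` of bilinear forms on a pair of
monoidal Hom-coalgebras; forms are encoded as functionals on `C ⊗ D`. -/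
noncomputable def convForm (CC : HomCoalg k C) (DD : HomCoalg k D)
    (u v : Module.Dual k (C ⊗[k] D)) (c : C) (d : D) : k :=
  TensorProduct.lid k k (TensorProduct.map u v
    (TensorProduct.tensorTensorTensorComm k C C D D (CC.comul c ⊗ₜ[k] DD.comul d)))

theorem convForm_eq_sum (CC : HomCoalg k C) (DD : HomCoalg k D)
    (u v : Module.Dual k (C ⊗[k] D)) {c : C} {d : D} {s : Finset (C × C)} {t : Finset (D × D)}
    (hc : CC.comul c = ∑ i ∈ s, i.1 ⊗ₜ[k] i.2) (hd : DD.comul d = ∑ j ∈ t, j.1 ⊗ₜ[k] j.2) :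
    convForm CC DD u v c d =
      ∑ i ∈ s, ∑ j ∈ t, u (i.1 ⊗ₜ[k] j.1) * v (i.2 ⊗ₜ[k] j.2) := by
  simpa [convForm, hc, hd, TensorProduct.sum_tmul, TensorProduct.tmul_sum] using Finset.sum_comm

theorem convForm_comp_comm (CC : HomCoalg k C) (DD : HomCoalg k D)
    (u v : Module.Dual k (C ⊗[k] D)) (c : C) (d : D) :
    convForm DD CC (u ∘ₗ TensorProduct.comm k D C) (v ∘ₗ TensorProduct.comm k D C) d c =
      convForm CC DD u v c d := by
  obtain ⟨s, hc⟩ := TensorProduct.exists_finset (CC.comul c)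
  obtain ⟨t, hd⟩ := TensorProduct.exists_finset (DD.comul d)
  rw [convForm_eq_sum CC DD u v hc hd, convForm_eq_sum DD CC _ _ hd hc]
  exact Finset.sum_comm

/-- Both sides expand to `α(c₁, e₁) γ(d₁, e₂) ω(c₂, d₂)`. -/
theorem convForm_eq_convForm_of_eq_convD
    (CC : HomCoalg k C) (DD : HomCoalg k D) (EE : HomCoalg k E)
    (α : C →ₗ[k] E →ₗ[k] k) (γ : D →ₗ[k] E →ₗ[k] k) (ω : C →ₗ[k] D →ₗ[k] k)
    {F : Module.Dual k (C ⊗[k] D)} {G : Module.Dual k (C ⊗[k] E)} {d : D} {e : E}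
    (hF : ∀ x y, F (x ⊗ₜ[k] y) = convD EE (α x) (γ y) e)
    (hG : ∀ x z, G (x ⊗ₜ[k] z) = convD DD (γ.flip z) (ω x) d) (c : C) :
    convForm CC DD F (TensorProduct.lift ω) c d = convForm CC EE (TensorProduct.lift α) G c e := by
  obtain ⟨s, hc⟩ := TensorProduct.exists_finset (CC.comul c)
  obtain ⟨t, hd⟩ := TensorProduct.exists_finset (DD.comul d)
  obtain ⟨r, he⟩ := TensorProduct.exists_finset (EE.comul e)
  calc convForm CC DD F (TensorProduct.lift ω) c d
    _ = ∑ i ∈ s, ∑ j ∈ t, ∑ l ∈ r, α i.1 l.1 * γ j.1 l.2 * ω i.2 j.2 := by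
      simp only [convForm_eq_sum CC DD _ _ hc hd, hF, convD_apply_eq_sum EE _ _ he,
        TensorProduct.lift.tmul, Finset.sum_mul]
    _ = ∑ i ∈ s, ∑ l ∈ r, ∑ j ∈ t, α i.1 l.1 * (γ j.1 l.2 * ω i.2 j.2) := by
      simp only [mul_assoc]
      exact Finset.sum_congr rfl fun i _ => Finset.sum_comm
    _ = convForm CC EE (TensorProduct.lift α) G c e := by
      simp only [convForm_eq_sum CC EE _ _ hc he, hG, convD_apply_eq_sum DD _ _ hd,
        TensorProduct.lift.tmul, LinearMap.flip_apply, Finset.mul_sum]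

end Convolution

section PreCoquasitriangular

variable {k : Type*} [Field k] {T : Type*} [AddCommGroup T] [Module k T]

/-- A form `ζ` satisfying (5.1)–(5.4), i.e. a coquasitriangular structure that need not be
convolution invertible. The right-hand sides of (5.3) and (5.4) are written as convolution
products of functionals. -/
structure IsPreCoquasitriangular (P : HomBialg k T) (ζ : T →ₗ[k] T →ₗ[k] k) : Prop where
  apply_str_str : ∀ h g, ζ (P.str h) (P.str g) = ζ h g
  braided_comm : ∀ h g,
    TensorProduct.lid k T
        (TensorProduct.map (TensorProduct.lift ζ)
          (TensorProduct.lift P.mul ∘ₗ (TensorProduct.comm k T T).toLinearMap)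
          (TensorProduct.tensorTensorTensorComm k T T T T (P.comul h ⊗ₜ[k] P.comul g))) =
      TensorProduct.rid k T
        (TensorProduct.map (TensorProduct.lift P.mul) (TensorProduct.lift ζ)
          (TensorProduct.tensorTensorTensorComm k T T T T (P.comul h ⊗ₜ[k] P.comul g)))
  apply_str_symm_mul : ∀ h g c,
    ζ (P.str.symm h) (P.mul g c) =
      convD P.toHomCoalg (ζ.flip (P.str g)) (ζ.flip (P.str c)) h
  apply_mul_str_symm : ∀ h g c,
    ζ (P.mul h g) (P.str.symm c) = convD P.toHomCoalg (ζ (P.str g)) (ζ (P.str h)) c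

variable {P : HomBialg k T} {ζ : T →ₗ[k] T →ₗ[k] k}

theorem IsCoquasitriangular.isPreCoquasitriangular {ζi : T →ₗ[k] T →ₗ[k] k}
    (hζ : IsCoquasitriangular P ζ ζi) : IsPreCoquasitriangular P ζ := by
  obtain ⟨-, -, apply_str_str, braided_comm, apply_str_symm_mul, apply_mul_str_symm⟩ := hζ
  refine ⟨apply_str_str, braided_comm, apply_str_symm_mul, fun h g c => ?_⟩
  rw [apply_mul_str_symm, TensorProduct.map_comm, TensorProduct.lid_comm,
    ← TensorProduct.lid_eq_rid]
  rfl

namespace IsPreCoquasitriangular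

theorem apply_str_comp_str (hζ : IsPreCoquasitriangular P ζ) (a : T) :
    ζ (P.str a) ∘ₗ P.str = ζ a :=
  LinearMap.ext fun b => hζ.apply_str_str a b

theorem flip_apply_str_comp_str (hζ : IsPreCoquasitriangular P ζ) (a : T) :
    ζ.flip (P.str a) ∘ₗ P.str = ζ.flip a :=
  LinearMap.ext fun b => hζ.apply_str_str b a

theorem apply_mul_right (hζ : IsPreCoquasitriangular P ζ) (c a b : T) :
    ζ c (P.mul a b) = convD P.toHomCoalg (ζ.flip a) (ζ.flip b) c := by
  rw [← P.str.symm_apply_apply c, hζ.apply_str_symm_mul, convD_apply_str,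
    hζ.flip_apply_str_comp_str, hζ.flip_apply_str_comp_str, P.str.symm_apply_apply]

theorem apply_mul_left (hζ : IsPreCoquasitriangular P ζ) (a b c : T) :
    ζ (P.mul a b) c = convD P.toHomCoalg (ζ b) (ζ a) c := by
  rw [← P.str.symm_apply_apply c, hζ.apply_mul_str_symm, convD_apply_str,
    hζ.apply_str_comp_str, hζ.apply_str_comp_str, P.str.symm_apply_apply]

theorem convForm_lift_mul_comm (hζ : IsPreCoquasitriangular P ζ) (φ : Module.Dual k T) (h g : T) :
    convForm P.toHomCoalg P.toHomCoalg (TensorProduct.lift ζ)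
        (φ ∘ₗ TensorProduct.lift P.mul ∘ₗ TensorProduct.comm k T T) h g =
      convForm P.toHomCoalg P.toHomCoalg (φ ∘ₗ TensorProduct.lift P.mul)
        (TensorProduct.lift ζ) h g := by
  have lid_map (u : Module.Dual k (T ⊗[k] T)) (f : T ⊗[k] T →ₗ[k] T) :
      (TensorProduct.lid k k).toLinearMap ∘ₗ TensorProduct.map u (φ ∘ₗ f) =
        φ ∘ₗ (TensorProduct.lid k T).toLinearMap ∘ₗ TensorProduct.map u f :=
    TensorProduct.ext' fun _ _ => by simp
  have rid_map (u : Module.Dual k (T ⊗[k] T)) (f : T ⊗[k] T →ₗ[k] T) :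
      (TensorProduct.lid k k).toLinearMap ∘ₗ TensorProduct.map (φ ∘ₗ f) u =
        φ ∘ₗ (TensorProduct.rid k T).toLinearMap ∘ₗ TensorProduct.map f u :=
    TensorProduct.ext' fun _ _ => by simp [mul_comm]
  exact (LinearMap.congr_fun (lid_map _ _) _).trans <|
    (congrArg φ (hζ.braided_comm h g)).trans (LinearMap.congr_fun (rid_map _ _) _).symm

end IsPreCoquasitriangular

theorem coquasitriangular_flip_is_left_two_cocycle_general (hζ : IsPreCoquasitriangular P ζ) :
    IsLeftHom2Cocycle P ζ.flip := by
  refine ⟨fun h g => hζ.apply_str_str g h, fun h g c => ?_⟩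
  let K := P.toHomCoalg
  let m := TensorProduct.lift P.mul
  let τ := (TensorProduct.comm k T T).toLinearMap
  calc convForm K K (TensorProduct.lift ζ.flip) (ζ c ∘ₗ m) h g
    _ = convForm K K (TensorProduct.lift ζ) (ζ c ∘ₗ m ∘ₗ τ) g h := by
      rw [← convForm_comp_comm, TensorProduct.lift_comp_comm_eq, LinearMap.flip_flip,
        LinearMap.comp_assoc]
    _ = convForm K K (ζ c ∘ₗ m) (TensorProduct.lift ζ) g h := hζ.convForm_lift_mul_comm (ζ c) g h
    _ = convForm K K (TensorProduct.lift ζ.flip) (ζ.flip h ∘ₗ m) g c :=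
      convForm_eq_convForm_of_eq_convD K K K ζ.flip ζ.flip ζ
        (hζ.apply_mul_right c) (fun a b => hζ.apply_mul_left a b h) g

end PreCoquasitriangular

/-- If `(H, β, ζ)` is a coquasitriangular monoidal Hom-Hopf algebra,
then `σ(h, g) := ζ(g, h)` is a left monoidal Hom-2-cocycle on `(H, β)`. -/
theorem coquasitriangular_flip_is_left_two_cocycle
    {k : Type*} [Field k] {H : Type*} [AddCommGroup H] [Module k H]
    (P : HomHopf k H) (ζ ζi : H →ₗ[k] H →ₗ[k] k)
    (hcq : IsCoquasitriangular P.toHomBialg ζ ζi) :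
    IsLeftHom2Cocycle P.toHomBialg ζ.flip :=
  coquasitriangular_flip_is_left_two_cocycle_general hcq.isPreCoquasitriangular
end

section
/- Let (H, β, ζ) be a coquasitriangular monoidal Hom-Hopf algebra. Then ζ itself is a right monoidal Hom-2-cocycle on (H, β): ζ(β(h), β(g)) = ζ(h, g) and ζ(h_1g_1, k)ζ(h_2, g_2) = ζ(h, g_1k_1)ζ(g_2, k_2) for all h, g, k ∈ H. -/
open TensorProduct

/-!
By (5.3) and (5.4), both sides of the cocycle identity come from the trilinear expression
`ζ(g₁, c₁) ζ(h₁, c₂) ζ(h₂, g₂)`: contracting its first two factors gives `ζ(h₁ g₁, c) ζ(h₂, g₂)`,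
while contracting the last two gives `ζ(h, ζ(g₁, c₁) c₂ g₂)`, which is `ζ(h, g₁ c₁) ζ(g₂, c₂)`
by the commutation rule (5.2).
-/

section TensorSums

variable {R M N M' N' A B : Type*} [CommSemiring R]
  [AddCommMonoid M] [Module R M] [AddCommMonoid N] [Module R N]
  [AddCommMonoid M'] [Module R M'] [AddCommMonoid N'] [Module R N']
  [AddCommMonoid A] [Module R A] [AddCommMonoid B] [Module R B]

theorem map_tensorTensorTensorComm_sum_tmul_sum (f : M ⊗[R] M' →ₗ[R] A) (g : N ⊗[R] N' →ₗ[R] B)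
    (X : Finset (M × N)) (Y : Finset (M' × N')) :
    TensorProduct.map f g (TensorProduct.tensorTensorTensorComm R M N M' N'
        ((∑ x ∈ X, x.1 ⊗ₜ[R] x.2) ⊗ₜ[R] ∑ y ∈ Y, y.1 ⊗ₜ[R] y.2))
      = ∑ x ∈ X, ∑ y ∈ Y, f (x.1 ⊗ₜ[R] y.1) ⊗ₜ[R] g (x.2 ⊗ₜ[R] y.2) := by
  simp only [TensorProduct.sum_tmul, TensorProduct.tmul_sum, map_sum,
    TensorProduct.tensorTensorTensorComm_tmul, TensorProduct.map_tmul]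
  exact Finset.sum_comm

end TensorSums

section LaxCoquasitriangular

variable {k : Type*} [Field k] {H : Type*} [AddCommGroup H] [Module k H]

/-- A lax coquasitriangular structure on a monoidal Hom-bialgebra: a bilinear form satisfying
(5.1)–(5.4) that need not be convolution invertible. -/
structure IsLaxCoquasitriangular (P : HomBialg k H) (ζ : H →ₗ[k] H →ₗ[k] k) : Prop where
  apply_str_str : ∀ h g, ζ (P.str h) (P.str g) = ζ h g
  comm : ∀ h g, TensorProduct.lid k H
      (TensorProduct.map (TensorProduct.lift ζ)
        (TensorProduct.lift P.mul ∘ₗ (TensorProduct.comm k H H).toLinearMap)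
        (TensorProduct.tensorTensorTensorComm k H H H H (P.comul h ⊗ₜ[k] P.comul g)))
      = TensorProduct.rid k H
          (TensorProduct.map (TensorProduct.lift P.mul) (TensorProduct.lift ζ)
            (TensorProduct.tensorTensorTensorComm k H H H H (P.comul h ⊗ₜ[k] P.comul g)))
  apply_symm_mul : ∀ h g c, ζ (P.str.symm h) (P.mul g c)
      = TensorProduct.lid k k
          (TensorProduct.map (ζ.flip (P.str g)) (ζ.flip (P.str c)) (P.comul h))
  apply_mul_symm : ∀ h g c, ζ (P.mul h g) (P.str.symm c)
      = TensorProduct.lid k k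
          (TensorProduct.map (ζ (P.str h)) (ζ (P.str g)) (TensorProduct.comm k H H (P.comul c)))

theorem IsCoquasitriangular.isLaxCoquasitriangular {P : HomBialg k H} {ζ ζi : H →ₗ[k] H →ₗ[k] k}
    (hζ : IsCoquasitriangular P ζ ζi) : IsLaxCoquasitriangular P ζ :=
  let ⟨_, _, apply_str_str, comm, apply_symm_mul, apply_mul_symm⟩ := hζ
  ⟨apply_str_str, comm, apply_symm_mul, apply_mul_symm⟩

namespace IsLaxCoquasitriangular

variable {P : HomBialg k H} {ζ : H →ₗ[k] H →ₗ[k] k} {h g c : H} {X Y Z : Finset (H × H)}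

theorem apply_mul_right_eq_sum (hζ : IsLaxCoquasitriangular P ζ)
    (hX : P.comul h = ∑ x ∈ X, x.1 ⊗ₜ[k] x.2) (u v : H) :
    ζ h (P.mul u v) = ∑ x ∈ X, ζ x.1 u * ζ x.2 v := by
  simpa [P.comul_str, hX, hζ.apply_str_str] using hζ.apply_symm_mul (P.str h) u v

theorem apply_mul_left_eq_sum (hζ : IsLaxCoquasitriangular P ζ)
    (hZ : P.comul c = ∑ z ∈ Z, z.1 ⊗ₜ[k] z.2) (u v : H) :
    ζ (P.mul u v) c = ∑ z ∈ Z, ζ v z.1 * ζ u z.2 := by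
  simpa [P.comul_str, hZ, hζ.apply_str_str, mul_comm] using hζ.apply_mul_symm u v (P.str c)

theorem sum_smul_mul_swap (hζ : IsLaxCoquasitriangular P ζ)
    (hY : P.comul g = ∑ y ∈ Y, y.1 ⊗ₜ[k] y.2) (hZ : P.comul c = ∑ z ∈ Z, z.1 ⊗ₜ[k] z.2) :
    ∑ y ∈ Y, ∑ z ∈ Z, ζ y.1 z.1 • P.mul z.2 y.2 = ∑ y ∈ Y, ∑ z ∈ Z, ζ y.2 z.2 • P.mul y.1 z.1 := by
  simpa [hY, hZ, map_tensorTensorTensorComm_sum_tmul_sum] using hζ.comm g c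

theorem sum_apply_mul_mul_apply (hζ : IsLaxCoquasitriangular P ζ)
    (hX : P.comul h = ∑ x ∈ X, x.1 ⊗ₜ[k] x.2) (hY : P.comul g = ∑ y ∈ Y, y.1 ⊗ₜ[k] y.2)
    (hZ : P.comul c = ∑ z ∈ Z, z.1 ⊗ₜ[k] z.2) :
    ∑ x ∈ X, ∑ y ∈ Y, ζ (P.mul x.1 y.1) c * ζ x.2 y.2
      = ∑ y ∈ Y, ∑ z ∈ Z, ζ h (P.mul y.1 z.1) * ζ y.2 z.2 := by
  calc ∑ x ∈ X, ∑ y ∈ Y, ζ (P.mul x.1 y.1) c * ζ x.2 y.2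
      = ∑ x ∈ X, ∑ y ∈ Y, ∑ z ∈ Z, ζ y.1 z.1 * (ζ x.1 z.2 * ζ x.2 y.2) := by
        simp only [hζ.apply_mul_left_eq_sum hZ, Finset.sum_mul, mul_assoc]
    _ = ∑ y ∈ Y, ∑ z ∈ Z, ∑ x ∈ X, ζ y.1 z.1 * (ζ x.1 z.2 * ζ x.2 y.2) := by
        rw [Finset.sum_comm]
        exact Finset.sum_congr rfl fun _ _ => Finset.sum_comm
    _ = ∑ y ∈ Y, ∑ z ∈ Z, ζ y.1 z.1 * ζ h (P.mul z.2 y.2) := by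
        simp only [hζ.apply_mul_right_eq_sum hX, Finset.mul_sum]
    _ = ζ h (∑ y ∈ Y, ∑ z ∈ Z, ζ y.1 z.1 • P.mul z.2 y.2) := by
        simp only [map_sum, map_smul, smul_eq_mul]
    _ = ζ h (∑ y ∈ Y, ∑ z ∈ Z, ζ y.2 z.2 • P.mul y.1 z.1) := by
        rw [hζ.sum_smul_mul_swap hY hZ]
    _ = ∑ y ∈ Y, ∑ z ∈ Z, ζ h (P.mul y.1 z.1) * ζ y.2 z.2 := by
        simp only [map_sum, map_smul, smul_eq_mul, mul_comm]

end IsLaxCoquasitriangular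

theorem coquasitriangular_is_right_two_cocycle_general {P : HomBialg k H}
    {ζ : H →ₗ[k] H →ₗ[k] k} (hζ : IsLaxCoquasitriangular P ζ) : IsRightHom2Cocycle P ζ := by
  refine ⟨hζ.apply_str_str, fun h g c => ?_⟩
  obtain ⟨X, hX⟩ := TensorProduct.exists_finset (P.comul h)
  obtain ⟨Y, hY⟩ := TensorProduct.exists_finset (P.comul g)
  obtain ⟨Z, hZ⟩ := TensorProduct.exists_finset (P.comul c)
  simpa [hX, hY, hZ, map_tensorTensorTensorComm_sum_tmul_sum]
    using hζ.sum_apply_mul_mul_apply hX hY hZ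

end LaxCoquasitriangular

/-- If `(H, β, ζ)` is a coquasitriangular monoidal Hom-Hopf algebra,
then `ζ` itself is a right monoidal Hom-2-cocycle on `(H, β)`. -/
theorem coquasitriangular_is_right_two_cocycle
    {k : Type*} [Field k] {H : Type*} [AddCommGroup H] [Module k H]
    (P : HomHopf k H) (ζ ζi : H →ₗ[k] H →ₗ[k] k)
    (hcq : IsCoquasitriangular P.toHomBialg ζ ζi) :
    IsRightHom2Cocycle P.toHomBialg ζ :=
  coquasitriangular_is_right_two_cocycle_general hcq.isLaxCoquasitriangular
end
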